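/- For all integers m ≥ 2 and n ≥ 1, χ_la(C_{2m} ∨ K_{2n−1}) = 2n + 1. -/

import Mathlib

open Finset SimpleGraph
open scoped Classical

/-- The induced vertex label (weight) of `x`: the sum of `f` over all edges incident to `x`. -/
noncomputable def vertexWeight {V : Type*} [Fintype V] (G : SimpleGraph V)
    (f : Sym2 V → ℕ) (x : V) : ℕ :=
  ∑ e ∈ G.edgeFinset.filter (fun e => x ∈ e), f e

/-- `f` is a local antimagic labeling of `G`: it restricts to a bijection from the edge set of
`G` onto `{1, …, q}` (where `q` is the number of edges), and adjacent vertices get distinct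
induced vertex labels. -/
def IsLocalAntimagic {V : Type*} [Fintype V] (G : SimpleGraph V) (f : Sym2 V → ℕ) : Prop :=
  Set.BijOn f G.edgeSet (Set.Icc 1 G.edgeSet.ncard) ∧
  ∀ ⦃x y : V⦄, G.Adj x y → vertexWeight G f x ≠ vertexWeight G f y

/-- The number of distinct induced vertex labels, `c(f)`. -/
noncomputable def colorCount {V : Type*} [Fintype V] (G : SimpleGraph V)
    (f : Sym2 V → ℕ) : ℕ :=
  (Finset.univ.image (vertexWeight G f)).card

/-- The local antimagic chromatic number `χ_la(G)`. -/
noncomputable def chiLA {V : Type*} [Fintype V] (G : SimpleGraph V) : ℕ :=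
  sInf { n | ∃ f : Sym2 V → ℕ, IsLocalAntimagic G f ∧ colorCount G f = n }

/-- The join `G ∨ H` of two vertex-disjoint graphs. -/
def joinG {α β : Type*} (G : SimpleGraph α) (H : SimpleGraph β) : SimpleGraph (α ⊕ β) :=
  SimpleGraph.fromRel (fun x y =>
    (∃ a b, x = Sum.inl a ∧ y = Sum.inl b ∧ G.Adj a b) ∨
    (∃ a b, x = Sum.inr a ∧ y = Sum.inr b ∧ H.Adj a b) ∨
    (∃ a b, x = Sum.inl a ∧ y = Sum.inr b))

/-!
The lower bound holds because an edge of the cycle and the complete graph span a clique, on which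
the weights are distinct.

For the upper bound, label the wheel `C_{2m} ∨ K_1` so that the rim weights alternate between two
values and the hub is heavier than the rim. Replace the hub by `2p + 1` independent vertices and
label the new spokes, column by column, back and forth: every rim vertex then gains the same amount,
so the rim still has two weights, while the column sums increase strictly. Finally, put the largest
labels on the edges of the complete graph in any order. Matching the columns by size with the
vertices sorted by their weight inside the complete graph keeps all hub weights distinct, and
each of them stays above the rim weights because its `2p` new edges carry the largest labels.
-/

theorem bijOn_Icc_ncard {α : Type*} {s : Set α} {f : α → ℕ} (hinj : Set.InjOn f s)
    (hmaps : Set.MapsTo f s (Set.Icc 1 s.ncard)) : Set.BijOn f s (Set.Icc 1 s.ncard) := by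
  refine ⟨hmaps, hinj, (Set.eq_of_subset_of_ncard_le hmaps.image_subset ?_).ge⟩
  simp [hinj.ncard_image, ← coe_Icc]

theorem exists_bijOn_edgeSet {V : Type*} [Finite V] (G : SimpleGraph V) (N : ℕ) :
    ∃ f : Sym2 V → ℕ, Set.BijOn f G.edgeSet (Set.Ioc N (N + G.edgeSet.ncard)) := by
  apply G.edgeSet.toFinite.exists_bijOn_of_encard_eq
  simp [← coe_Ioc, Set.encard_coe_eq_coe_finsetCard, G.edgeSet.toFinite.cast_ncard_eq]

section Weight

variable {V : Type*} [Fintype V] {G : SimpleGraph V} {f : Sym2 V → ℕ}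

theorem vertexWeight_eq_sum (G : SimpleGraph V) (f : Sym2 V → ℕ) (x : V) :
    vertexWeight G f x = ∑ y with G.Adj x y, f s(x, y) := by
  refine (sum_nbij (fun y ↦ s(x, y)) ?_ ?_ ?_ fun _ _ ↦ rfl).symm
  · intro y hy
    simpa using hy
  · exact fun y _ z _ h ↦ Sym2.congr_right.1 h
  · intro e he
    obtain ⟨he, y, rfl⟩ : e ∈ G.edgeSet ∧ x ∈ e := by simpa using he
    exact ⟨y, by simpa using he, rfl⟩

theorem degree_mul_le_vertexWeight {N : ℕ} (hN : ∀ e ∈ G.edgeSet, N ≤ f e) (x : V) :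
    G.degree x * N ≤ vertexWeight G f x := by
  rw [vertexWeight, ← incidenceFinset_eq_filter, ← card_incidenceFinset_eq_degree]
  exact card_nsmul_le_sum _ _ N fun e he ↦
    hN e (G.incidenceSet_subset x ((G.mem_incidenceFinset x e).1 he))

@[simp]
theorem vertexWeight_bot (f : Sym2 V → ℕ) (x : V) : vertexWeight ⊥ f x = 0 := by
  simp [vertexWeight]

theorem IsLocalAntimagic.isClique_card_le (hf : IsLocalAntimagic G f) {s : Finset V}
    (hs : G.IsClique s) : #s ≤ colorCount G f := by
  have hinj : Set.InjOn (vertexWeight G f) s := fun x hx y hy hxy ↦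
    by_contra fun hne ↦ hf.2 (hs hx hy hne) hxy
  rw [← card_image_of_injOn hinj]
  exact card_le_card (image_subset_image (subset_univ s))

theorem IsLocalAntimagic.chiLA_eq_card (hf : IsLocalAntimagic G f) {s : Finset V}
    (hs : G.IsClique s) (hle : colorCount G f ≤ #s) : chiLA G = #s := by
  have hmem : colorCount G f ∈ {n | ∃ f, IsLocalAntimagic G f ∧ colorCount G f = n} :=
    ⟨f, hf, rfl⟩
  refine ((Nat.sInf_le hmem).trans hle).antisymm (le_csInf ⟨_, hmem⟩ ?_)
  rintro _ ⟨g, hg, rfl⟩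
  exact hg.isClique_card_le hs

end Weight

section Join

variable {V W : Type*} {G : SimpleGraph V} {H : SimpleGraph W}

@[simp]
theorem joinG_adj_inl_inl {a b : V} :
    (joinG G H).Adj (.inl a) (.inl b) ↔ G.Adj a b := by
  simp only [joinG, fromRel_adj]
  refine ⟨?_, fun h ↦ ⟨by simpa using h.ne, by simp [h]⟩⟩
  rintro ⟨-, h | h⟩
  · simpa using h
  · simpa [adj_comm] using h

@[simp]
theorem joinG_adj_inr_inr {a b : W} :
    (joinG G H).Adj (.inr a) (.inr b) ↔ H.Adj a b := by
  simp only [joinG, fromRel_adj]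
  refine ⟨?_, fun h ↦ ⟨by simpa using h.ne, by simp [h]⟩⟩
  rintro ⟨-, h | h⟩
  · simpa using h
  · simpa [adj_comm] using h

@[simp]
theorem joinG_adj_inl_inr (a : V) (b : W) : (joinG G H).Adj (.inl a) (.inr b) := by
  simp [joinG]

@[simp]
theorem joinG_adj_inr_inl (a : V) (b : W) : (joinG G H).Adj (.inr b) (.inl a) :=
  (joinG_adj_inl_inr a b).symm

theorem isClique_joinG_disjSum {s : Finset V} {t : Finset W} (hs : G.IsClique s)
    (ht : H.IsClique t) : (joinG G H).IsClique (s.disjSum t : Finset (V ⊕ W)) := by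
  rintro (a | a) ha (b | b) hb hne
  · exact joinG_adj_inl_inl.2 (hs (by simpa using ha) (by simpa using hb) (by simpa using hne))
  · exact joinG_adj_inl_inr a b
  · exact joinG_adj_inr_inl b a
  · exact joinG_adj_inr_inr.2 (ht (by simpa using ha) (by simpa using hb) (by simpa using hne))

theorem edgeSet_joinG (G : SimpleGraph V) (H : SimpleGraph W) :
    (joinG G H).edgeSet = Sym2.map .inl '' G.edgeSet ∪
      Set.range (fun p : V × W ↦ s(.inl p.1, .inr p.2)) ∪ Sym2.map .inr '' H.edgeSet := by
  ext e
  constructor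
  · induction e with | _ x y
    rcases x with a | a <;> rcases y with b | b <;> intro h
    · exact .inl <| .inl ⟨s(a, b), by simpa using h, rfl⟩
    · exact .inl <| .inr ⟨(a, b), rfl⟩
    · exact .inl <| .inr ⟨(b, a), Sym2.eq_swap⟩
    · exact .inr ⟨s(a, b), by simpa using h, rfl⟩
  · rintro ((⟨e, he, rfl⟩ | ⟨p, rfl⟩) | ⟨e, he, rfl⟩)
    · induction e with | _ a b => simpa using he
    · simp
    · induction e with | _ a b => simpa using he

theorem mk_inl_inr_injective :
    Function.Injective (fun p : V × W ↦ (s(.inl p.1, .inr p.2) : Sym2 (V ⊕ W))) := by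
  rintro ⟨a, b⟩ ⟨c, d⟩ h
  simpa using h

theorem map_inl_ne_mk_inl_inr (e : Sym2 V) (v : V) (w : W) :
    e.map .inl ≠ (s(.inl v, .inr w) : Sym2 (V ⊕ W)) := by
  induction e with | _ a b => simp

theorem map_inr_ne_mk_inl_inr (e : Sym2 W) (v : V) (w : W) :
    e.map .inr ≠ (s(.inl v, .inr w) : Sym2 (V ⊕ W)) := by
  induction e with | _ a b => simp

theorem map_inl_ne_map_inr (e : Sym2 V) (e' : Sym2 W) :
    e.map .inl ≠ e'.map (.inr : W → V ⊕ W) := by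
  induction e with | _ a b => induction e' with | _ c d => simp

theorem ncard_edgeSet_joinG [Finite V] [Finite W] (G : SimpleGraph V) (H : SimpleGraph W) :
    (joinG G H).edgeSet.ncard =
      G.edgeSet.ncard + Nat.card V * Nat.card W + H.edgeSet.ncard := by
  rw [edgeSet_joinG, Set.ncard_union_eq, Set.ncard_union_eq,
    Set.ncard_image_of_injective _ (Sym2.map.injective Sum.inl_injective),
    Set.ncard_image_of_injective _ (Sym2.map.injective Sum.inr_injective),
    ← Set.image_univ, Set.ncard_image_of_injective _ mk_inl_inr_injective]
  · simp
  · rw [Set.disjoint_left]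
    rintro _ ⟨e, -, rfl⟩ ⟨p, h⟩
    exact map_inl_ne_mk_inl_inr e _ _ h.symm
  · rw [Set.disjoint_left]
    rintro _ (⟨e, -, rfl⟩ | ⟨p, rfl⟩) ⟨e', -, h⟩
    · exact map_inl_ne_map_inr e e' h.symm
    · exact map_inr_ne_mk_inl_inr e' _ _ h

theorem forall_mem_edgeSet_joinG {P : Sym2 (V ⊕ W) → Prop} :
    (∀ e ∈ (joinG G H).edgeSet, P e) ↔ (∀ e ∈ G.edgeSet, P (e.map .inl)) ∧
      (∀ v w, P s(.inl v, .inr w)) ∧ ∀ e ∈ H.edgeSet, P (e.map .inr) := by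
  simp only [edgeSet_joinG, Set.mem_union, or_imp, forall_and, Set.forall_mem_image,
    Set.forall_mem_range, Prod.forall, and_assoc]

theorem injOn_edgeSet_joinG {α : Type*} {f : Sym2 (V ⊕ W) → α} :
    Set.InjOn f (joinG G H).edgeSet ↔ Set.InjOn (f ∘ Sym2.map .inl) G.edgeSet ∧
      (Function.Injective fun p : V × W ↦ f s(.inl p.1, .inr p.2)) ∧
      Set.InjOn (f ∘ Sym2.map .inr) H.edgeSet ∧
      (∀ e ∈ G.edgeSet, ∀ v w, f (e.map .inl) ≠ f s(.inl v, .inr w)) ∧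
      (∀ e ∈ G.edgeSet, ∀ e' ∈ H.edgeSet, f (e.map .inl) ≠ f (e'.map .inr)) ∧
      ∀ e ∈ H.edgeSet, ∀ v w, f (e.map .inr) ≠ f s(.inl v, .inr w) := by
  obtain ⟨hG, hs, hH⟩ := forall_mem_edgeSet_joinG.1 fun e (he : e ∈ (joinG G H).edgeSet) ↦ he
  constructor
  · intro hf
    exact ⟨hf.comp (Sym2.map.injective Sum.inl_injective).injOn hG,
      fun p q h ↦ mk_inl_inr_injective (hf (hs p.1 p.2) (hs q.1 q.2) h),
      hf.comp (Sym2.map.injective Sum.inr_injective).injOn hH,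
      fun e he v w h ↦ map_inl_ne_mk_inl_inr e v w (hf (hG e he) (hs v w) h),
      fun e he e' he' h ↦ map_inl_ne_map_inr e e' (hf (hG e he) (hH e' he') h),
      fun e he v w h ↦ map_inr_ne_mk_inl_inr e v w (hf (hH e he) (hs v w) h)⟩
  · rintro ⟨hG, hs, hH, hGs, hGH, hHs⟩
    rw [edgeSet_joinG]
    rintro _ ((⟨e, he, rfl⟩ | ⟨p, rfl⟩) | ⟨e, he, rfl⟩) _
      ((⟨e', he', rfl⟩ | ⟨p', rfl⟩) | ⟨e', he', rfl⟩) h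
    · rw [hG he he' h]
    · exact absurd h (hGs e he _ _)
    · exact absurd h (hGH e he e' he')
    · exact absurd h.symm (hGs e' he' _ _)
    · rw [hs h]
    · exact absurd h.symm (hHs e' he' _ _)
    · exact absurd h.symm (hGH e' he' e he)
    · exact absurd h (hHs e he _ _)
    · rw [hH he he' h]

/-- The edge labeling of a join `G ∨ H` that is `g` on the edges of `G`, `h` on the edges of `H`,
and gives the edge between `v` and `w` the label `s v w`. -/
def joinLabeling (g : Sym2 V → ℕ) (s : V → W → ℕ) (h : Sym2 W → ℕ) : Sym2 (V ⊕ W) → ℕ :=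
  Sym2.lift ⟨fun
    | .inl a, .inl b => g s(a, b)
    | .inl a, .inr b => s a b
    | .inr a, .inl b => s b a
    | .inr a, .inr b => h s(a, b), by
      rintro (a | a) (b | b) <;> simp [Sym2.eq_swap]⟩

section joinLabeling

variable (g : Sym2 V → ℕ) (s : V → W → ℕ) (h : Sym2 W → ℕ)

@[simp]
theorem joinLabeling_mk_inl_inr (v : V) (w : W) : joinLabeling g s h s(.inl v, .inr w) = s v w :=
  rfl

@[simp]
theorem joinLabeling_map_inl (e : Sym2 V) : joinLabeling g s h (e.map .inl) = g e := by
  induction e with | _ a b => rfl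

@[simp]
theorem joinLabeling_map_inr (e : Sym2 W) : joinLabeling g s h (e.map .inr) = h e := by
  induction e with | _ a b => rfl

@[simp]
theorem joinLabeling_comp_map_inl : joinLabeling g s h ∘ Sym2.map .inl = g :=
  funext (joinLabeling_map_inl g s h)

@[simp]
theorem joinLabeling_comp_map_inr : joinLabeling g s h ∘ Sym2.map .inr = h :=
  funext (joinLabeling_map_inr g s h)

end joinLabeling

variable [Fintype V] [Fintype W]

theorem vertexWeight_joinG_inl (f : Sym2 (V ⊕ W) → ℕ) (v : V) :
    vertexWeight (joinG G H) f (.inl v) =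
      vertexWeight G (f ∘ Sym2.map .inl) v + ∑ w, f s(.inl v, .inr w) := by
  simp [vertexWeight_eq_sum, sum_filter, Fintype.sum_sum_type]

theorem vertexWeight_joinG_inr (f : Sym2 (V ⊕ W) → ℕ) (w : W) :
    vertexWeight (joinG G H) f (.inr w) =
      ∑ v, f s(.inl v, .inr w) + vertexWeight H (f ∘ Sym2.map .inr) w := by
  simp [vertexWeight_eq_sum, sum_filter, Fintype.sum_sum_type, Sym2.eq_swap]

theorem IsLocalAntimagic.colorCount_joinG_top {f : Sym2 (V ⊕ W) → ℕ}
    (hf : IsLocalAntimagic (joinG G (⊤ : SimpleGraph W)) f) :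
    colorCount (joinG G (⊤ : SimpleGraph W)) f =
      (univ.image fun v ↦ vertexWeight (joinG G (⊤ : SimpleGraph W)) f (.inl v)).card +
        Fintype.card W := by
  have hinj : Function.Injective fun w ↦
      vertexWeight (joinG G (⊤ : SimpleGraph W)) f (.inr w) := fun w w' h ↦
    by_contra fun hne ↦ hf.2 (joinG_adj_inr_inr.2 hne) h
  have himage : univ.image (vertexWeight (joinG G (⊤ : SimpleGraph W)) f) =
      (univ.image fun v ↦ vertexWeight (joinG G (⊤ : SimpleGraph W)) f (.inl v)) ∪
        univ.image fun w ↦ vertexWeight (joinG G (⊤ : SimpleGraph W)) f (.inr w) := by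
    ext
    simp [Sum.exists]
  rw [colorCount, himage, card_union_of_disjoint, card_image_of_injective _ hinj, card_univ]
  simp only [Finset.disjoint_left, mem_image, mem_univ, true_and]
  rintro _ ⟨v, rfl⟩ ⟨w, h⟩
  exact hf.2 (joinG_adj_inl_inr v w) h.symm

end Join

section Extension

variable {V : Type*} {G : SimpleGraph V}

theorem bijOn_edgeSet_joinLabeling {W : Type*} [Finite V] [Finite W] {N : ℕ} {f : Sym2 (V ⊕ W) → ℕ}
    (hf : Set.BijOn f (joinG G ⊥).edgeSet (Set.Icc 1 N)) (σ : Equiv.Perm W) {H : SimpleGraph W}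
    {h : Sym2 W → ℕ} (hh : Set.BijOn h H.edgeSet (Set.Ioc N (N + H.edgeSet.ncard))) :
    Set.BijOn (joinLabeling (f ∘ Sym2.map .inl) (fun v w ↦ f s(.inl v, .inr (σ w))) h)
      (joinG G H).edgeSet (Set.Icc 1 (joinG G H).edgeSet.ncard) := by
  obtain ⟨hle_inl, hle_spoke, -⟩ := forall_mem_edgeSet_joinG.1 hf.mapsTo
  have hcard : (joinG G H).edgeSet.ncard = N + H.edgeSet.ncard := by
    have hN : (joinG G (⊥ : SimpleGraph W)).edgeSet.ncard = N := by
      simp [hf.ncard_eq, ← coe_Icc]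
    rw [← hN, ncard_edgeSet_joinG, ncard_edgeSet_joinG]
    simp
  obtain ⟨hinj_inl, hinj_spoke, -, hne, -⟩ := injOn_edgeSet_joinG.1 hf.injOn
  refine bijOn_Icc_ncard (injOn_edgeSet_joinG.2 ⟨?_, ?_, ?_, ?_, ?_, ?_⟩)
    (forall_mem_edgeSet_joinG.2 ⟨?_, ?_, ?_⟩)
  · simpa using hinj_inl
  · exact hinj_spoke.comp (Equiv.prodCongr (.refl V) σ).injective
  · simpa using hh.injOn
  · intro e he v w
    simpa using hne e he v (σ w)
  · intro e he e' he'
    simpa using ((hle_inl e he).2.trans_lt (hh.mapsTo he').1).ne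
  · intro e he v w
    simpa using ((hle_spoke v (σ w)).2.trans_lt (hh.mapsTo he).1).ne'
  · intro e he
    simpa [hcard] using Set.Icc_subset_Icc_right (Nat.le_add_right _ _) (hle_inl e he)
  · intro v w
    simpa [hcard] using Set.Icc_subset_Icc_right (Nat.le_add_right _ _) (hle_spoke v (σ w))
  · intro e he
    rw [joinLabeling_map_inr, hcard]
    exact ⟨Nat.one_le_of_lt (hh.mapsTo he).1, (hh.mapsTo he).2⟩

theorem exists_isLocalAntimagic_joinG_top [Fintype V] {k N : ℕ} {f : Sym2 (V ⊕ Fin (k + 1)) → ℕ}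
    (hf : Set.BijOn f (joinG G ⊥).edgeSet (Set.Icc 1 N))
    (hinl : ∀ ⦃u v⦄, G.Adj u v →
      vertexWeight (joinG G ⊥) f (.inl u) ≠ vertexWeight (joinG G ⊥) f (.inl v))
    (hinr : StrictMono fun c ↦ vertexWeight (joinG G ⊥) f (.inr c))
    (hlt : ∀ v c, vertexWeight (joinG G ⊥) f (.inl v) <
      vertexWeight (joinG G ⊥) f (.inr c) + k * N) :
    ∃ f', IsLocalAntimagic (joinG G (⊤ : SimpleGraph (Fin (k + 1)))) f' ∧
      ∀ v, vertexWeight (joinG G ⊤) f' (.inl v) = vertexWeight (joinG G ⊥) f (.inl v) := by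
  obtain ⟨h, hh⟩ := exists_bijOn_edgeSet (⊤ : SimpleGraph (Fin (k + 1))) N
  -- The weights inside the complete graph are arbitrary, so match the columns in increasing order
  -- of their sums with the vertices in increasing order of these weights.
  let σ := Tuple.sort (vertexWeight ⊤ h)
  let f' := joinLabeling (f ∘ Sym2.map .inl) (fun v w ↦ f s(.inl v, .inr (σ.symm w))) h
  have hweight_inl (v) : vertexWeight (joinG G ⊤) f' (.inl v) =
      vertexWeight (joinG G ⊥) f (.inl v) := by
    simp [vertexWeight_joinG_inl, f', Equiv.sum_comp σ.symm fun w ↦ f s(.inl v, .inr w)]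
  have hweight_inr (c) : vertexWeight (joinG G ⊤) f' (.inr (σ c)) =
      vertexWeight (joinG G ⊥) f (.inr c) + vertexWeight ⊤ h (σ c) := by
    simp [vertexWeight_joinG_inr, f']
  have hinr' : StrictMono fun c ↦ vertexWeight (joinG G ⊤) f' (.inr (σ c)) := fun c c' hcc' ↦ by
    simpa only [hweight_inr, σ, Function.comp_apply] using
      add_lt_add_of_lt_of_le (hinr hcc') (Tuple.monotone_sort (vertexWeight ⊤ h) hcc'.le)
  have hlt' (v c) : vertexWeight (joinG G ⊤) f' (.inl v) <
      vertexWeight (joinG G ⊤) f' (.inr (σ c)) := by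
    have hdeg : k * N ≤ vertexWeight ⊤ h (σ c) := by
      simpa [← card_neighborFinset_eq_degree, neighborFinset_eq_filter, filter_ne] using
        degree_mul_le_vertexWeight (fun e he ↦ (hh.mapsTo he).1.le) (σ c)
    rw [hweight_inl, hweight_inr]
    exact (hlt v c).trans_le (by gcongr)
  refine ⟨f', ⟨bijOn_edgeSet_joinLabeling hf σ.symm hh, ?_⟩, hweight_inl⟩
  rintro (u | u) (v | v) hadj
  · simpa only [hweight_inl] using hinl (joinG_adj_inl_inl.1 hadj)
  · simpa using (hlt' u (σ.symm v)).ne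
  · simpa using (hlt' v (σ.symm u)).ne'
  · simpa using hinr'.injective.ne (σ.symm.injective.ne (joinG_adj_inr_inr.1 hadj).ne)

end Extension

section Snake

variable {M : ℕ}

/-- The entry in row `i` and column `c` of the boustrophedon filling, column by column, of an array
with `M` rows by `1, 2, 3, …`. Columns are indexed from `0`; odd ones are filled backwards, so any
two consecutive columns `2c`, `2c + 1` contribute the same sum to every row. -/
def snake (c : ℕ) (i : Fin M) : ℕ :=
  c * M + if Even c then (i : ℕ) + 1 else M - i

theorem mul_lt_snake (c : ℕ) (i : Fin M) : c * M < snake c i := by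
  unfold snake
  split_ifs <;> omega

theorem snake_le (c : ℕ) (i : Fin M) : snake c i ≤ (c + 1) * M := by
  rw [snake, add_one_mul]
  split_ifs <;> omega

theorem snake_lt_snake {c c' : ℕ} (h : c < c') (i j : Fin M) : snake c i < snake c' j :=
  ((snake_le c i).trans (Nat.mul_le_mul_right M h)).trans_lt (mul_lt_snake c' j)

theorem snake_inj {c c' : ℕ} {i j : Fin M} : snake c i = snake c' j ↔ c = c' ∧ i = j := by
  refine ⟨fun h ↦ ?_, by rintro ⟨rfl, rfl⟩; rfl⟩
  obtain hlt | rfl | hlt := lt_trichotomy c c'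
  · exact absurd h (snake_lt_snake hlt i j).ne
  · refine ⟨rfl, Fin.ext ?_⟩
    unfold snake at h
    split_ifs at h <;> omega
  · exact absurd h (snake_lt_snake hlt j i).ne'

theorem sum_snake (p : ℕ) (i : Fin M) :
    ∑ c ∈ range (2 * p), snake c i = p * (2 * p * M + 1) := by
  induction p with
  | zero => simp
  | succ p ih =>
    have hpair : snake (2 * p) i + snake (2 * p + 1) i = (4 * p + 2) * M + 1 := by
      have := i.isLt
      simp only [snake, even_two_mul, Nat.not_even_two_mul_add_one, if_true, if_false]
      ring_nf
      omega
    rw [Nat.mul_succ, sum_range_succ, sum_range_succ, ih, add_assoc, hpair]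
    ring

variable {V : Type*} [Fintype V] {s : V → ℕ} {N p : ℕ}

/-- Spoke labels for `G ∨ H` with `H` of order `2 * p + 1`: the given labels `s` in column `0`,
followed by `2 * p` columns of `snake` shifted past `N`. -/
noncomputable def snakeSpoke (s : V → ℕ) (N p : ℕ) (v : V) : Fin (2 * p + 1) → ℕ :=
  Fin.cons (s v) fun c ↦ N + snake c (Fintype.equivFin V v)

@[simp]
theorem snakeSpoke_zero (v : V) : snakeSpoke s N p v 0 = s v :=
  rfl

@[simp]
theorem snakeSpoke_succ (v : V) (c : Fin (2 * p)) :
    snakeSpoke s N p v c.succ = N + snake c (Fintype.equivFin V v) :=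
  rfl

theorem lt_snakeSpoke_succ (v : V) (c : Fin (2 * p)) : N < snakeSpoke s N p v c.succ :=
  Nat.lt_add_of_pos_right (Nat.zero_lt_of_lt (mul_lt_snake _ _))

theorem snakeSpoke_lt_snakeSpoke (hs : ∀ v, s v ≤ N) {c c' : Fin (2 * p + 1)} (h : c < c')
    (v v' : V) : snakeSpoke s N p v c < snakeSpoke s N p v' c' := by
  cases c' using Fin.cases with
  | zero => simp at h
  | succ c' =>
    cases c using Fin.cases with
    | zero => exact (hs v).trans_lt (lt_snakeSpoke_succ v' c')
    | succ c => exact Nat.add_lt_add_left (snake_lt_snake (Fin.succ_lt_succ_iff.1 h) _ _) N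

theorem snakeSpoke_injective (hs : ∀ v, s v ≤ N) (hinj : Function.Injective s) :
    Function.Injective fun x : V × Fin (2 * p + 1) ↦ snakeSpoke s N p x.1 x.2 := by
  rintro ⟨v, c⟩ ⟨v', c'⟩ h
  dsimp only at h
  obtain hlt | rfl | hlt := lt_trichotomy c c'
  · exact absurd h (snakeSpoke_lt_snakeSpoke hs hlt v v').ne
  · cases c using Fin.cases with
    | zero => rw [hinj h]
    | succ c => rw [(Fintype.equivFin V).injective (snake_inj.1 (Nat.add_left_cancel h)).2]
  · exact absurd h (snakeSpoke_lt_snakeSpoke hs hlt v' v).ne'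

theorem snakeSpoke_le (hs : ∀ v, s v ≤ N) (v : V) (c : Fin (2 * p + 1)) :
    snakeSpoke s N p v c ≤ N + 2 * p * Fintype.card V := by
  cases c using Fin.cases with
  | zero => exact Nat.le_add_right_of_le (hs v)
  | succ c =>
    exact Nat.add_le_add_left ((snake_le _ _).trans (Nat.mul_le_mul_right _ c.isLt)) N

theorem sum_snakeSpoke (v : V) :
    ∑ c, snakeSpoke s N p v c = s v + p * (2 * N + 2 * p * Fintype.card V + 1) := by
  simp only [Fin.sum_univ_succ, snakeSpoke_zero, snakeSpoke_succ, sum_add_distrib, sum_const,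
    card_univ, Fintype.card_fin, smul_eq_mul,
    Fin.sum_univ_eq_sum_range fun c ↦ snake c (Fintype.equivFin V v), sum_snake]
  ring

end Snake

section OddExtension

variable {V : Type*} [Fintype V] {G : SimpleGraph V} {f : Sym2 (V ⊕ Fin 1) → ℕ} {N : ℕ}

/-- The extension of a labeling `f` of `G ∨ K_1` by `1, …, N` to the join of `G` with `2 * p + 1`
isolated vertices, the new spokes being labelled by `snakeSpoke`. -/
noncomputable def snakeExtension (f : Sym2 (V ⊕ Fin 1) → ℕ) (N p : ℕ) :
    Sym2 (V ⊕ Fin (2 * p + 1)) → ℕ :=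
  joinLabeling (f ∘ Sym2.map .inl) (snakeSpoke (fun v ↦ f s(.inl v, .inr 0)) N p) 0

theorem bijOn_snakeExtension (hf : Set.BijOn f (joinG G ⊥).edgeSet (Set.Icc 1 N)) (p : ℕ) :
    Set.BijOn (snakeExtension f N p) (joinG G ⊥).edgeSet
      (Set.Icc 1 (N + 2 * p * Fintype.card V)) := by
  obtain ⟨hle_inl, hle_spoke, -⟩ := forall_mem_edgeSet_joinG.1 hf.mapsTo
  obtain ⟨hinj_inl, hinj_spoke, -, hne, -⟩ := injOn_edgeSet_joinG.1 hf.injOn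
  have hle (v) : f s(.inl v, .inr 0) ≤ N := (hle_spoke v 0).2
  have hcard : (joinG G (⊥ : SimpleGraph (Fin (2 * p + 1)))).edgeSet.ncard =
      N + 2 * p * Fintype.card V := by
    have hN : (joinG G (⊥ : SimpleGraph (Fin 1))).edgeSet.ncard = N := by
      simp [hf.ncard_eq, ← coe_Icc]
    rw [← hN, ncard_edgeSet_joinG, ncard_edgeSet_joinG]
    simp only [edgeSet_bot, Set.ncard_empty, Nat.card_eq_fintype_card, Fintype.card_fin]
    ring
  rw [← hcard]
  refine bijOn_Icc_ncard (injOn_edgeSet_joinG.2 ⟨?_, ?_, by simp, ?_, by simp, by simp⟩)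
    (forall_mem_edgeSet_joinG.2 ⟨?_, ?_, by simp⟩)
  · simpa [snakeExtension] using hinj_inl
  · exact snakeSpoke_injective hle fun v v' h ↦
      congrArg Prod.fst (hinj_spoke (a₁ := (v, 0)) (a₂ := (v', 0)) h)
  · intro e he v c
    rw [snakeExtension, joinLabeling_map_inl, joinLabeling_mk_inl_inr]
    cases c using Fin.cases with
    | zero => exact hne e he v 0
    | succ c => exact ((hle_inl e he).2.trans_lt (lt_snakeSpoke_succ v c)).ne
  · intro e he
    simpa [hcard, snakeExtension] using
      Set.Icc_subset_Icc_right (Nat.le_add_right _ _) (hle_inl e he)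
  · intro v c
    rw [snakeExtension, joinLabeling_mk_inl_inr, hcard]
    refine ⟨?_, snakeSpoke_le hle v c⟩
    cases c using Fin.cases with
    | zero => exact (hle_spoke v 0).1
    | succ c => exact Nat.one_le_of_lt (lt_snakeSpoke_succ v c)

theorem vertexWeight_snakeExtension_inl (f : Sym2 (V ⊕ Fin 1) → ℕ) (N p : ℕ) (v : V) :
    vertexWeight (joinG G ⊥) (snakeExtension f N p) (.inl v) =
      vertexWeight (joinG G ⊥) f (.inl v) + p * (2 * N + 2 * p * Fintype.card V + 1) := by
  simp [vertexWeight_joinG_inl, snakeExtension, sum_snakeSpoke, add_assoc]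

theorem vertexWeight_snakeExtension_inr (f : Sym2 (V ⊕ Fin 1) → ℕ) (N p : ℕ)
    (c : Fin (2 * p + 1)) : vertexWeight (joinG G ⊥) (snakeExtension f N p) (.inr c) =
      ∑ v, snakeSpoke (fun v ↦ f s(.inl v, .inr 0)) N p v c := by
  simp [vertexWeight_joinG_inr, snakeExtension]

variable [Nonempty V]

theorem strictMono_vertexWeight_snakeExtension_inr (hf : ∀ v, f s(.inl v, .inr 0) ≤ N) (p : ℕ) :
    StrictMono fun c ↦ vertexWeight (joinG G ⊥) (snakeExtension f N p) (.inr c) := by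
  intro c c' hcc'
  simp only [vertexWeight_snakeExtension_inr]
  exact sum_lt_sum_of_nonempty univ_nonempty fun v _ ↦ snakeSpoke_lt_snakeSpoke hf hcc' v v

theorem vertexWeight_snakeExtension_inl_lt (hf : ∀ v, f s(.inl v, .inr 0) ≤ N) {v : V}
    (hv : vertexWeight (joinG G ⊥) f (.inl v) < vertexWeight (joinG G ⊥) f (.inr 0))
    (p : ℕ) (c : Fin (2 * p + 1)) :
    vertexWeight (joinG G ⊥) (snakeExtension f N p) (.inl v) <
      vertexWeight (joinG G ⊥) (snakeExtension f N p) (.inr c) +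
        2 * p * (N + 2 * p * Fintype.card V) := by
  have hp : p ≤ p * p * Fintype.card V :=
    (Nat.le_mul_self p).trans (Nat.le_mul_of_pos_right _ Fintype.card_pos)
  have hle : p * (2 * N + 2 * p * Fintype.card V + 1) ≤
      2 * p * (N + 2 * p * Fintype.card V) := by
    linarith
  calc
    _ = vertexWeight (joinG G ⊥) f (.inl v) + p * (2 * N + 2 * p * Fintype.card V + 1) :=
      vertexWeight_snakeExtension_inl ..
    _ < vertexWeight (joinG G ⊥) f (.inr 0) + 2 * p * (N + 2 * p * Fintype.card V) :=
      add_lt_add_of_lt_of_le hv hle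
    _ = vertexWeight (joinG G ⊥) (snakeExtension f N p) (.inr 0) +
        2 * p * (N + 2 * p * Fintype.card V) := by
      rw [vertexWeight_snakeExtension_inr, vertexWeight_joinG_inr]
      simp
    _ ≤ _ := by
      gcongr
      exact (strictMono_vertexWeight_snakeExtension_inr hf p).monotone (Fin.zero_le c)

theorem exists_isLocalAntimagic_joinG_top_odd
    (hf : IsLocalAntimagic (joinG G (⊤ : SimpleGraph (Fin 1))) f)
    (hlt : ∀ v, vertexWeight (joinG G ⊤) f (.inl v) < vertexWeight (joinG G ⊤) f (.inr 0))
    (p : ℕ) :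
    ∃ f', IsLocalAntimagic (joinG G (⊤ : SimpleGraph (Fin (2 * p + 1)))) f' ∧
      colorCount (joinG G ⊤) f' = colorCount (joinG G ⊤) f + 2 * p := by
  have hcount := hf.colorCount_joinG_top
  rw [Subsingleton.elim (⊤ : SimpleGraph (Fin 1)) ⊥] at hf hlt hcount ⊢
  have hle (v) := ((forall_mem_edgeSet_joinG.1 hf.1.mapsTo).2.1 v 0).2
  have hne ⦃u v⦄ (huv : G.Adj u v) := hf.2 (joinG_adj_inl_inl.2 huv)
  obtain ⟨f', hf', hweight⟩ := exists_isLocalAntimagic_joinG_top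
    (bijOn_snakeExtension hf.1 p) (by simpa [vertexWeight_snakeExtension_inl] using hne)
    (strictMono_vertexWeight_snakeExtension_inr hle p)
    fun v ↦ vertexWeight_snakeExtension_inl_lt hle (hlt v) p
  have hshift (a : V → ℕ) (T : ℕ) : #(univ.image fun v ↦ a v + T) = #(univ.image a) := by
    rw [← card_image_of_injective (univ.image a) (add_left_injective T), image_image]
    rfl
  refine ⟨f', hf', ?_⟩
  rw [hf'.colorCount_joinG_top, hcount, Fintype.card_fin, Fintype.card_fin, add_assoc,
    add_comm 1]
  simp only [hweight, vertexWeight_snakeExtension_inl, hshift]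

theorem chiLA_joinG_top_odd (hf : IsLocalAntimagic (joinG G (⊤ : SimpleGraph (Fin 1))) f)
    (hlt : ∀ v, vertexWeight (joinG G ⊤) f (.inl v) < vertexWeight (joinG G ⊤) f (.inr 0))
    {s : Finset V} (hs : G.IsClique s) (hcount : colorCount (joinG G ⊤) f ≤ #s + 1) (p : ℕ) :
    chiLA (joinG G (⊤ : SimpleGraph (Fin (2 * p + 1)))) = #s + (2 * p + 1) := by
  obtain ⟨f', hf', hcount'⟩ := exists_isLocalAntimagic_joinG_top_odd hf hlt p
  have hclique := isClique_joinG_disjSum hs (H := (⊤ : SimpleGraph (Fin (2 * p + 1))))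
    (t := univ) fun _ _ _ _ hne ↦ hne
  have hcard : #(s.disjSum (univ : Finset (Fin (2 * p + 1)))) = #s + (2 * p + 1) := by
    rw [card_disjSum, card_univ, Fintype.card_fin]
  rw [← hcard]
  exact hf'.chiLA_eq_card hclique (by omega)

end OddExtension

section Cycle

variable {n : ℕ} [NeZero n]

theorem edgeSet_cycleGraph (hn : 2 ≤ n) :
    (cycleGraph n).edgeSet = Set.range fun i ↦ s(i, i + 1) := by
  obtain ⟨k, rfl⟩ := Nat.exists_eq_add_of_le' hn
  ext e
  induction e with | _ a b
  simp only [mem_edgeSet, cycleGraph_adj, Set.mem_range, Sym2.eq_iff, sub_eq_iff_eq_add']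
  constructor
  · rintro (rfl | rfl)
    · exact ⟨b, .inr ⟨rfl, rfl⟩⟩
    · exact ⟨a, .inl ⟨rfl, rfl⟩⟩
  · rintro ⟨i, ⟨rfl, rfl⟩ | ⟨rfl, rfl⟩⟩ <;> simp

theorem fin_sub_one_ne_add_one (hn : 3 ≤ n) (i : Fin n) : i - 1 ≠ i + 1 := by
  obtain ⟨k, rfl⟩ := Nat.exists_eq_add_of_le' hn
  rw [Ne, sub_eq_iff_eq_add, add_assoc, left_eq_add, Fin.ext_iff]
  simp [Fin.val_add, Nat.mod_eq_of_lt (show 2 < k + 3 by omega)]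

theorem sym2_mk_add_one_injective (hn : 3 ≤ n) :
    Function.Injective fun i : Fin n ↦ s(i, i + 1) := by
  intro i j h
  obtain ⟨h, -⟩ | ⟨h, h'⟩ := Sym2.eq_iff.1 h
  · exact h
  · exact absurd (sub_eq_iff_eq_add.2 h'.symm) (h ▸ fin_sub_one_ne_add_one hn j)

theorem ncard_edgeSet_cycleGraph (hn : 3 ≤ n) : (cycleGraph n).edgeSet.ncard = n := by
  rw [edgeSet_cycleGraph (by omega), ← Set.image_univ,
    Set.ncard_image_of_injective _ (sym2_mk_add_one_injective hn), Set.ncard_univ, Nat.card_fin]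

theorem vertexWeight_cycleGraph (hn : 3 ≤ n) (f : Sym2 (Fin n) → ℕ) (i : Fin n) :
    vertexWeight (cycleGraph n) f i = f s(i - 1, i) + f s(i, i + 1) := by
  have hne := fin_sub_one_ne_add_one hn i
  obtain ⟨k, rfl⟩ := Nat.exists_eq_add_of_le' hn
  calc
    vertexWeight (cycleGraph (k + 3)) f i = ∑ j ∈ {i - 1, i + 1}, f s(i, j) := by
      refine (vertexWeight_eq_sum _ f i).trans (sum_congr ?_ fun _ _ ↦ rfl)
      ext j
      simp [cycleGraph_adj, sub_eq_iff_eq_add', eq_sub_iff_add_eq', eq_comm, add_comm]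
    _ = f s(i - 1, i) + f s(i, i + 1) := by rw [sum_pair hne, Sym2.eq_swap]

end Cycle

section Wheel

section Labeling

variable {n : ℕ} [NeZero n] {r s : Fin n → ℕ}

/-- The labeling of the wheel `C_n ∨ K_1` giving the rim edge `{i, i + 1}` the label `r i` and
the spoke at `i` the label `s i`. -/
noncomputable def wheelLabeling (r s : Fin n → ℕ) : Sym2 (Fin n ⊕ Fin 1) → ℕ :=
  joinLabeling (Function.extend (fun i ↦ s(i, i + 1)) r 0) (fun i _ ↦ s i) 0

theorem wheelLabeling_map_inl_mk (hn : 3 ≤ n) (i : Fin n) :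
    wheelLabeling r s (s(i, i + 1).map .inl) = r i := by
  rw [wheelLabeling, joinLabeling_map_inl]
  exact (sym2_mk_add_one_injective hn).extend_apply r 0 i

theorem bijOn_wheelLabeling (hn : 3 ≤ n) (hr : Function.Injective r) (hs : Function.Injective s)
    (hrs : ∀ i j, r i ≠ s j) (hr_mem : ∀ i, r i ∈ Set.Icc 1 (2 * n))
    (hs_mem : ∀ i, s i ∈ Set.Icc 1 (2 * n)) :
    Set.BijOn (wheelLabeling r s) (joinG (cycleGraph n) (⊤ : SimpleGraph (Fin 1))).edgeSet
      (Set.Icc 1 (joinG (cycleGraph n) (⊤ : SimpleGraph (Fin 1))).edgeSet.ncard) := by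
  rw [Subsingleton.elim (⊤ : SimpleGraph (Fin 1)) ⊥]
  have hcard : (joinG (cycleGraph n) (⊥ : SimpleGraph (Fin 1))).edgeSet.ncard = 2 * n := by
    simp [ncard_edgeSet_joinG, ncard_edgeSet_cycleGraph hn, two_mul]
  have hrim := wheelLabeling_map_inl_mk (r := r) (s := s) hn
  have hedge := edgeSet_cycleGraph (Nat.le_of_succ_le hn)
  refine bijOn_Icc_ncard (injOn_edgeSet_joinG.2 ⟨?_, ?_, by simp, ?_, by simp, by simp⟩)
    (forall_mem_edgeSet_joinG.2 ⟨?_, ?_, by simp⟩)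
  · rw [hedge]
    rintro _ ⟨i, rfl⟩ _ ⟨j, rfl⟩ hij
    rw [Function.comp_apply, Function.comp_apply, hrim, hrim] at hij
    rw [hr hij]
  · rintro ⟨i, c⟩ ⟨j, c'⟩ hij
    exact Prod.ext (hs hij) (Subsingleton.elim c c')
  · rw [hedge, Set.forall_mem_range]
    intro i j c
    exact (hrim i).trans_ne (hrs i j)
  · rw [hedge, Set.forall_mem_range, hcard]
    simpa only [hrim] using hr_mem
  · rw [hcard]
    exact fun i _ ↦ hs_mem i

theorem vertexWeight_wheelLabeling_inl (hn : 3 ≤ n) (i : Fin n) :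
    vertexWeight (joinG (cycleGraph n) (⊤ : SimpleGraph (Fin 1))) (wheelLabeling r s) (.inl i) =
      r (i - 1) + r i + s i := by
  have hprev := wheelLabeling_map_inl_mk (r := r) (s := s) hn (i - 1)
  rw [sub_add_cancel] at hprev
  rw [vertexWeight_joinG_inl, vertexWeight_cycleGraph hn, Function.comp_apply, hprev,
    Function.comp_apply, wheelLabeling_map_inl_mk hn, Fin.sum_univ_one]
  rfl

theorem vertexWeight_wheelLabeling_inr (r s : Fin n → ℕ) (c : Fin 1) :
    vertexWeight (joinG (cycleGraph n) (⊤ : SimpleGraph (Fin 1))) (wheelLabeling r s) (.inr c) =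
      ∑ i, s i := by
  rw [Subsingleton.elim (⊤ : SimpleGraph (Fin 1)) ⊥]
  simp [vertexWeight_joinG_inr, wheelLabeling]

end Labeling

/-- Rim labels `r i` and spoke labels `s i`, for `i < n`, of a labeling of the wheel `C_n ∨ K_1`
whose rim weights alternate between `A` and `B`, both less than the weight of the hub. The rim edge
`{i, i + 1}` is labelled `r i`; indexing by `ℕ` isolates the edge closing the cycle in
`sum_zero`. -/
structure IsAlternatingWheelLabeling (n : ℕ) (r s : ℕ → ℕ) (A B : ℕ) : Prop where
  rim_mem : ∀ i < n, r i ∈ Set.Icc 1 (2 * n)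
  spoke_mem : ∀ i < n, s i ∈ Set.Icc 1 (2 * n)
  rim_inj : ∀ i < n, ∀ j < n, r i = r j → i = j
  spoke_inj : ∀ i < n, ∀ j < n, s i = s j → i = j
  rim_ne_spoke : ∀ i < n, ∀ j < n, r i ≠ s j
  sum_zero : r (n - 1) + r 0 + s 0 = A
  sum_succ : ∀ i < n - 1, r i + r (i + 1) + s (i + 1) = if Even (i + 1) then A else B
  ne : A ≠ B
  left_lt : A < ∑ i ∈ range n, s i
  right_lt : B < ∑ i ∈ range n, s i

namespace IsAlternatingWheelLabeling

variable {n A B : ℕ} {r s : ℕ → ℕ} [NeZero n]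

theorem sum_sub_one (h : IsAlternatingWheelLabeling n r s A B) (i : Fin n) :
    r ↑(i - 1) + r i + s i = if Even (i : ℕ) then A else B := by
  obtain ⟨k, rfl⟩ := Nat.exists_eq_add_one_of_ne_zero (NeZero.ne n)
  cases i using Fin.cases with
  | zero => simpa using h.sum_zero
  | succ i =>
    have hprev : ((i.succ - 1 : Fin (k + 1)) : ℕ) = i := by
      simp [Fin.coe_sub_one]
    rw [hprev, Fin.val_succ]
    exact h.sum_succ i (by omega)

theorem vertexWeight_inl (h : IsAlternatingWheelLabeling n r s A B) (hn : 3 ≤ n) (i : Fin n) :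
    vertexWeight (joinG (cycleGraph n) (⊤ : SimpleGraph (Fin 1)))
      (wheelLabeling (fun i ↦ r i) fun i ↦ s i) (.inl i) = if Even (i : ℕ) then A else B :=
  (vertexWeight_wheelLabeling_inl hn i).trans (h.sum_sub_one i)

theorem vertexWeight_inl_lt (h : IsAlternatingWheelLabeling n r s A B) (hn : 3 ≤ n) (i : Fin n)
    (c : Fin 1) :
    vertexWeight (joinG (cycleGraph n) (⊤ : SimpleGraph (Fin 1)))
        (wheelLabeling (fun i ↦ r i) fun i ↦ s i) (.inl i) <
      vertexWeight (joinG (cycleGraph n) (⊤ : SimpleGraph (Fin 1)))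
        (wheelLabeling (fun i ↦ r i) fun i ↦ s i) (.inr c) := by
  rw [h.vertexWeight_inl hn, vertexWeight_wheelLabeling_inr, Fin.sum_univ_eq_sum_range s]
  split_ifs
  exacts [h.left_lt, h.right_lt]

theorem isLocalAntimagic (h : IsAlternatingWheelLabeling n r s A B) (hn : 3 ≤ n)
    (heven : Even n) : IsLocalAntimagic (joinG (cycleGraph n) (⊤ : SimpleGraph (Fin 1)))
      (wheelLabeling (fun i ↦ r i) fun i ↦ s i) := by
  refine ⟨bijOn_wheelLabeling hn (fun i j hij ↦ Fin.ext (h.rim_inj i i.isLt j j.isLt hij))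
    (fun i j hij ↦ Fin.ext (h.spoke_inj i i.isLt j j.isLt hij))
    (fun i j ↦ h.rim_ne_spoke i i.isLt j j.isLt) (fun i ↦ h.rim_mem i i.isLt)
    fun i ↦ h.spoke_mem i i.isLt, ?_⟩
  rintro (i | i) (j | j) hadj
  · have hparity : ¬Even (i : ℕ) ↔ Even (j : ℕ) := by
      have hcolor : decide ((i : ℕ) % 2 = 0) ≠ decide ((j : ℕ) % 2 = 0) :=
        (cycleGraph.bicoloring_of_even n heven).valid (joinG_adj_inl_inl.1 hadj)
      simpa [Nat.even_iff, not_iff] using hcolor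
    simp only [h.vertexWeight_inl hn, ← hparity, ite_not]
    split_ifs
    exacts [h.ne, h.ne.symm]
  · exact (h.vertexWeight_inl_lt hn i j).ne
  · exact (h.vertexWeight_inl_lt hn j i).ne'
  · exact absurd (Subsingleton.elim i j) (joinG_adj_inr_inr.1 hadj).ne

theorem colorCount_le (h : IsAlternatingWheelLabeling n r s A B) (hn : 3 ≤ n) (heven : Even n) :
    colorCount (joinG (cycleGraph n) (⊤ : SimpleGraph (Fin 1)))
      (wheelLabeling (fun i ↦ r i) fun i ↦ s i) ≤ 3 := by
  have hrim : (univ.image fun i : Fin n ↦ if Even (i : ℕ) then A else B) ⊆ {A, B} := by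
    intro x
    simp only [mem_image, mem_univ, true_and, mem_insert, mem_singleton]
    rintro ⟨i, rfl⟩
    split_ifs <;> simp
  rw [(h.isLocalAntimagic hn heven).colorCount_joinG_top, Fintype.card_fin]
  simp only [h.vertexWeight_inl hn]
  exact Nat.add_le_add_right ((card_le_card hrim).trans card_le_two) 1

end IsAlternatingWheelLabeling

/-- Rim labels for the wheel `C_{4h} ∨ K_1`, `h ≥ 2`. Even-indexed edges ascend through
`1, …, 2h`, the others descend in two interleaved runs. Along each residue class of `i` modulo `4`
the sums `r (i - 1) + r i`, `i ≥ 1`, increase in steps of `1`. -/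
def fourMulRim (h i : ℕ) : ℕ :=
  if i % 2 = 0 then i / 2 + 1 else if i % 4 = 1 then 3 * h - i / 4 else 6 * h - i / 4

/-- Spoke labels matching `fourMulRim`: they complete the rim sums to the weights `10h + 2` and
`11h + 1`. -/
def fourMulSpoke (h i : ℕ) : ℕ :=
  if i = 0 then 5 * h else if i % 4 = 0 then 4 * h - i / 4 else if i % 4 = 1 then 8 * h - i / 4
  else if i % 4 = 2 then 7 * h - i / 4 else 5 * h - 1 - i / 4

theorem mul_le_sum_fourMulSpoke (h : ℕ) :
    4 * h * (3 * h + 1) ≤ ∑ i ∈ range (4 * h), fourMulSpoke h i := by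
  have hle (i) (hi : i ∈ range (4 * h)) : 3 * h + 1 ≤ fourMulSpoke h i := by
    rw [mem_range] at hi
    unfold fourMulSpoke
    split_ifs <;> omega
  simpa using card_nsmul_le_sum _ _ _ hle

theorem isAlternatingWheelLabeling_fourMul {h : ℕ} (hh : 2 ≤ h) :
    IsAlternatingWheelLabeling (4 * h) (fourMulRim h) (fourMulSpoke h) (10 * h + 2)
      (11 * h + 1) := by
  have hsum := mul_le_sum_fourMulSpoke h
  constructor
  case ne => omega
  case left_lt => nlinarith
  case right_lt => nlinarith
  all_goals
    clear hsum
    intros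
    simp only [fourMulRim, fourMulSpoke, Set.mem_Icc, Nat.even_iff] at *
    split_ifs at * <;> omega

/-- Rim labels for the wheel `C_{4h+2} ∨ K_1`; they are exactly `1, …, 4h + 2`. -/
def fourMulAddTwoRim (h i : ℕ) : ℕ :=
  if i % 2 = 0 then i / 2 + 1 else if i % 4 = 1 then 4 * h + 2 - i / 4 else 3 * h + 1 - i / 4

/-- Spoke labels matching `fourMulAddTwoRim`: they complete the rim sums to the weights `9h + 6`
and `11h + 7`. -/
def fourMulAddTwoSpoke (h i : ℕ) : ℕ :=
  if i % 4 = 0 then 6 * h + 3 - i / 4 else if i % 4 = 1 then 7 * h + 4 - i / 4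
  else if i % 4 = 2 then 5 * h + 2 - i / 4 else 8 * h + 4 - i / 4

theorem mul_le_sum_fourMulAddTwoSpoke (h : ℕ) :
    (4 * h + 2) * (4 * h + 3) ≤ ∑ i ∈ range (4 * h + 2), fourMulAddTwoSpoke h i := by
  have hle (i) (hi : i ∈ range (4 * h + 2)) : 4 * h + 3 ≤ fourMulAddTwoSpoke h i := by
    rw [mem_range] at hi
    unfold fourMulAddTwoSpoke
    split_ifs <;> omega
  simpa using card_nsmul_le_sum _ _ _ hle

theorem isAlternatingWheelLabeling_fourMulAddTwo {h : ℕ} (hh : 1 ≤ h) :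
    IsAlternatingWheelLabeling (4 * h + 2) (fourMulAddTwoRim h) (fourMulAddTwoSpoke h) (9 * h + 6)
      (11 * h + 7) := by
  have hsum := mul_le_sum_fourMulAddTwoSpoke h
  constructor
  case ne => omega
  case left_lt => nlinarith
  case right_lt => nlinarith
  all_goals
    clear hsum
    intros
    simp only [fourMulAddTwoRim, fourMulAddTwoSpoke, Set.mem_Icc, Nat.even_iff] at *
    split_ifs at * <;> omega

theorem isAlternatingWheelLabeling_four :
    IsAlternatingWheelLabeling 4 (fun i ↦ [2, 4, 3, 7].getD i 0) (fun i ↦ [6, 5, 8, 1].getD i 0)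
      15 11 := by
  constructor <;> decide

theorem exists_isAlternatingWheelLabeling {m : ℕ} (hm : 2 ≤ m) :
    ∃ r s A B, IsAlternatingWheelLabeling (2 * m) r s A B := by
  obtain ⟨h, rfl | rfl⟩ := m.even_or_odd'
  · obtain rfl | hh : h = 1 ∨ 2 ≤ h := by omega
    -- For `h = 1` the weights `10h + 2` and `11h + 1` coincide.
    · exact ⟨_, _, _, _, isAlternatingWheelLabeling_four⟩
    · rw [← mul_assoc]
      exact ⟨_, _, _, _, isAlternatingWheelLabeling_fourMul hh⟩
  · rw [mul_add, ← mul_assoc]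
    exact ⟨_, _, _, _, isAlternatingWheelLabeling_fourMulAddTwo (by omega)⟩

theorem exists_isLocalAntimagic_evenWheel {m : ℕ} (hm : 2 ≤ m) :
    ∃ f, IsLocalAntimagic (joinG (cycleGraph (2 * m)) (⊤ : SimpleGraph (Fin 1))) f ∧
      colorCount (joinG (cycleGraph (2 * m)) ⊤) f ≤ 3 ∧
      ∀ i, vertexWeight (joinG (cycleGraph (2 * m)) ⊤) f (.inl i) <
        vertexWeight (joinG (cycleGraph (2 * m)) ⊤) f (.inr 0) := by
  have : NeZero (2 * m) := ⟨by omega⟩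
  have hn : 3 ≤ 2 * m := by omega
  obtain ⟨r, s, A, B, h⟩ := exists_isAlternatingWheelLabeling hm
  exact ⟨_, h.isLocalAntimagic hn (even_two_mul m), h.colorCount_le hn (even_two_mul m),
    fun i ↦ h.vertexWeight_inl_lt hn i 0⟩

end Wheel

/-- Theorem: For all integers `m ≥ 2` and `n ≥ 1`, `χ_la(C_{2m} ∨ K_{2n−1}) = 2n + 1`. -/
theorem chiLA_evenCycle_join_completeOdd (m n : ℕ) (hm : 2 ≤ m) (hn : 1 ≤ n) :
    chiLA (joinG (cycleGraph (2 * m)) (⊤ : SimpleGraph (Fin (2 * n - 1)))) = 2 * n + 1 := by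
  obtain ⟨p, rfl⟩ := Nat.exists_eq_add_of_le' hn
  have : NeZero (2 * m) := ⟨by omega⟩
  obtain ⟨f, hf, hcount, hlt⟩ := exists_isLocalAntimagic_evenWheel hm
  have hedge : (cycleGraph (2 * m)).Adj 0 (0 + 1) := by
    rw [← mem_edgeSet, edgeSet_cycleGraph (by omega)]
    exact ⟨0, rfl⟩
  have hclique : (cycleGraph (2 * m)).IsClique ({0, 0 + 1} : Finset (Fin (2 * m))) := by
    rw [coe_pair, isClique_pair]
    exact fun _ ↦ hedge
  have hcard : #({0, 0 + 1} : Finset (Fin (2 * m))) = 2 := card_pair hedge.ne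
  calc
    chiLA (joinG (cycleGraph (2 * m)) (⊤ : SimpleGraph (Fin (2 * p + 1)))) = 2 + (2 * p + 1) := by
      rw [chiLA_joinG_top_odd hf hlt hclique (by omega) p, hcard]
    _ = 2 * (p + 1) + 1 := by ring
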